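/- arXiv:2106.11474 — 3 statements merged into one kernel-verified Lean document; each statement's English description precedes it below -/
import Mathlib

section
/- Let R be a commutative ring, S a multiplicative subset of R, M an R-module and n ≥ 0 an integer. If Ext^{n+1}_R(M, N) is uniformly S-torsion for every R-module N, then Ext^{n+k}_R(M, N) is uniformly S-torsion for every R-module N and every integer k ≥ 1. -/
/-!
By dimension shifting, an abelian category with enough projectives has for every `M` and `d` an
object `K` and a class `α ∈ Ext^d(M, K)` such that each class in `Ext^{d+m}(M, N)` is a Yoneda
product `α ∘ β`: take for `K` a `d`-th syzygy of `M`. Yoneda products are `R`-bilinear, so a scalar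
killing the single class `α` kills `Ext^{d+m}(M, N)` for all `m` and `N`. For `d = n + 1` the
hypothesis at `N = K` provides such a scalar in `S`.

Yoneda products live on `Abelian.Ext`, whereas the hypothesis concerns the derived functor `Ext`;
in positive degrees the two have the same annihilators, since on a projective resolution `P` of `M`
a scalar `r` kills either of them if and only if it sends cocycles `P_{n+1} ⟶ N` to coboundaries.
-/

open CategoryTheory

universe u

/-- A module is uniformly `S`-torsion if a single `s ∈ S` kills it. -/
def UnifSTorsion {R : Type u} [CommRing R] (S : Submonoid R) (M : Type*) [Zero M] [SMul R M] :
    Prop :=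
  ∃ s ∈ S, ∀ m : M, s • m = (0 : M)

universe w v

section Comparison

lemma mem_annihilator_homology_iff {A : Type*} [Ring A] (T : ShortComplex (ModuleCat A)) (a : A) :
    a ∈ Module.annihilator A T.homology ↔
      ∀ z : T.X₂, T.g z = 0 → ∃ b : T.X₁, T.f b = a • z := by
  rw [T.moduleCatHomologyIso.toLinearEquiv.annihilator_eq, Module.mem_annihilator]
  change (∀ y : LinearMap.ker T.g.hom ⧸ LinearMap.range T.moduleCatToCycles, a • y = 0) ↔ _
  rw [(Submodule.mkQ_surjective _).forall]
  simp only [Submodule.mkQ_apply, ← Submodule.Quotient.mk_smul, Submodule.Quotient.mk_eq_zero,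
    Subtype.forall, LinearMap.mem_range, LinearMap.mem_ker]
  exact forall₂_congr fun z hz ↦ exists_congr fun b ↦ Subtype.ext_iff

variable {R : Type*} [Ring R] {C : Type u} [Category.{v} C] [Abelian C] [Linear R C] {X : C}

lemma mem_annihilator_ext_succ_iff [EnoughProjectives C] (P : ProjectiveResolution X) (Y : C)
    (n : ℕ) (r : R) :
    r ∈ Module.annihilator R (((Ext R C (n + 1)).obj (Opposite.op X)).obj Y) ↔
      ∀ f : P.complex.X (n + 1) ⟶ Y, P.complex.d (n + 2) (n + 1) ≫ f = 0 →
        ∃ g : P.complex.X n ⟶ Y, P.complex.d (n + 1) n ≫ g = r • f := by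
  let K := P.complex.linearYonedaObj R Y
  let e := P.isoExt (R := R) (n + 1) Y ≪≫
    K.homologyIsoSc' n (n + 1) (n + 2) (by simp) (by simp)
  rw [e.toLinearEquiv.annihilator_eq]
  exact mem_annihilator_homology_iff _ r

variable [HasExt.{w} C]

lemma smul_extMk (P : ProjectiveResolution X) {Y : C} {n m : ℕ} (hm : n + 1 = m) (r : R)
    (f : P.complex.X n ⟶ Y) (hf : P.complex.d m n ≫ f = 0) :
    r • P.extMk f m hm hf = P.extMk (r • f) m hm (by rw [Linear.comp_smul, hf, smul_zero]) := by
  simp only [Abelian.Ext.smul_eq_comp_mk₀, P.extMk_comp_mk₀, Linear.comp_smul, Category.comp_id]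

lemma mem_annihilator_abelianExt_succ_iff (P : ProjectiveResolution X) (Y : C) (n : ℕ) (r : R) :
    r ∈ Module.annihilator R (Abelian.Ext X Y (n + 1)) ↔
      ∀ f : P.complex.X (n + 1) ⟶ Y, P.complex.d (n + 2) (n + 1) ≫ f = 0 →
        ∃ g : P.complex.X n ⟶ Y, P.complex.d (n + 1) n ≫ g = r • f := by
  rw [Module.mem_annihilator]
  constructor
  · intro h f hf
    rw [← P.extMk_eq_zero_iff (r • f) (n + 2) rfl
      (by rw [Linear.comp_smul, hf, smul_zero]) n rfl, ← smul_extMk P rfl r f hf]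
    exact h _
  · intro h x
    obtain ⟨f, hf, rfl⟩ := P.extMk_surjective x (n + 2) rfl
    rw [smul_extMk, P.extMk_eq_zero_iff _ _ _ _ n rfl]
    exact h f hf

variable (R) in
lemma annihilator_ext_succ_eq_annihilator_abelianExt [EnoughProjectives C] (X Y : C) (n : ℕ) :
    Module.annihilator R (((Ext R C (n + 1)).obj (Opposite.op X)).obj Y) =
      Module.annihilator R (Abelian.Ext X Y (n + 1)) := by
  ext r
  rw [mem_annihilator_ext_succ_iff (projectiveResolution X),
    mem_annihilator_abelianExt_succ_iff (projectiveResolution X)]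

end Comparison

section WeaklyUniversal

variable {C : Type u} [Category.{v} C] [Abelian C] [HasExt.{w} C]

/-- A class `α ∈ Ext^d(X, K)` is weakly universal if every class in `Ext^{d+m}(X, Y)`, for any `m`
and `Y`, is a (not necessarily unique) Yoneda product of `α` with a class in `Ext^m(K, Y)`. The
total degree is a variable `p` with `d + m = p`, as in `Abelian.Ext.comp`. -/
def IsWeaklyUniversal {X K : C} {d : ℕ} (α : Abelian.Ext X K d) : Prop :=
  ∀ ⦃Y : C⦄ ⦃m p : ℕ⦄ (h : d + m = p) (x : Abelian.Ext X Y p),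
    ∃ β : Abelian.Ext K Y m, α.comp β h = x

lemma isWeaklyUniversal_mk₀_id (X : C) : IsWeaklyUniversal (Abelian.Ext.mk₀ (𝟙 X)) := by
  intro Y m p h x
  obtain rfl : m = p := by lia
  exact ⟨x, x.mk₀_id_comp⟩

lemma isWeaklyUniversal_extClass {T : ShortComplex C} (hT : T.ShortExact) [Projective T.X₂] :
    IsWeaklyUniversal hT.extClass := by
  intro Y m p h x
  obtain rfl : p = m + 1 := by lia
  exact Abelian.Ext.contravariant_sequence_exact₃ hT Y x
    (Abelian.Ext.eq_zero_of_projective _) h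

namespace IsWeaklyUniversal

variable {X K : C} {d : ℕ} {α : Abelian.Ext X K d}

lemma comp (hα : IsWeaklyUniversal α) {L : C} {e c : ℕ} {β : Abelian.Ext K L e}
    (hβ : IsWeaklyUniversal β) (hc : d + e = c) : IsWeaklyUniversal (α.comp β hc) := by
  intro Y m p h x
  obtain ⟨y, rfl⟩ := hα (m := e + m) (by lia) x
  obtain ⟨z, rfl⟩ := hβ rfl y
  exact ⟨z, Abelian.Ext.comp_assoc α β z hc rfl (by lia)⟩

lemma mem_annihilator {R : Type*} [Ring R] [Linear R C] (hα : IsWeaklyUniversal α) {r : R}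
    (hr : r • α = 0) (Y : C) {p : ℕ} (hp : d ≤ p) :
    r ∈ Module.annihilator R (Abelian.Ext X Y p) := by
  refine Module.mem_annihilator.2 fun x ↦ ?_
  obtain ⟨β, rfl⟩ := hα (Nat.add_sub_of_le hp) x
  rw [← Abelian.Ext.smul_comp, hr, Abelian.Ext.zero_comp]

end IsWeaklyUniversal

lemma exists_isWeaklyUniversal [EnoughProjectives C] (X : C) (d : ℕ) :
    ∃ (K : C) (α : Abelian.Ext X K d), IsWeaklyUniversal α := by
  induction d with
  | zero => exact ⟨X, _, isWeaklyUniversal_mk₀_id X⟩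
  | succ d ih =>
    obtain ⟨K, α, hα⟩ := ih
    let T := ShortComplex.kernelSequence (Projective.π K)
    have hT : T.ShortExact :=
      { exact := ShortComplex.kernelSequence_exact _
        epi_g := inferInstanceAs (Epi (Projective.π K)) }
    have : Projective T.X₂ := inferInstanceAs (Projective (Projective.over K))
    exact ⟨T.X₁, _, hα.comp (isWeaklyUniversal_extClass hT) rfl⟩

end WeaklyUniversal

theorem stmt6_general {R : Type u} [CommRing R] {C : Type*} [Category* C] [Abelian C]
    [Linear R C] [EnoughProjectives C] (S : Submonoid R) (M : C) (n : ℕ)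
    (h : ∀ N : C, UnifSTorsion S (((Ext R C (n + 1)).obj (Opposite.op M)).obj N)) :
    ∃ s ∈ S, ∀ (N : C) (k : ℕ), 1 ≤ k →
      ∀ x : ((Ext R C (n + k)).obj (Opposite.op M)).obj N, s • x = 0 := by
  have := HasExt.standard C
  obtain ⟨K, α, hα⟩ := exists_isWeaklyUniversal M (n + 1)
  obtain ⟨s, hs, hsK⟩ := h K
  rw [← Module.mem_annihilator, annihilator_ext_succ_eq_annihilator_abelianExt] at hsK
  have hsα : s • α = 0 := Module.mem_annihilator.1 hsK α
  refine ⟨s, hs, fun N k hk ↦ ?_⟩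
  obtain ⟨k, rfl⟩ := Nat.exists_eq_add_of_le' hk
  rw [← Module.mem_annihilator, ← add_assoc, annihilator_ext_succ_eq_annihilator_abelianExt]
  exact hα.mem_annihilator hsα N (by lia)

/-- If `Ext^{n+1}(M, N)` is uniformly `S`-torsion for every `N`, then so is
`Ext^{n+k}(M, N)` for every `N` and every `k ≥ 1`. -/
theorem stmt6 {R : Type u} [CommRing R] (S : Submonoid R) (M : ModuleCat.{u} R) (n : ℕ)
    (h : ∀ N : ModuleCat.{u} R,
      UnifSTorsion S (((Ext R (ModuleCat.{u} R) (n + 1)).obj (Opposite.op M)).obj N)) :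
    ∀ (N : ModuleCat.{u} R) (k : ℕ), 1 ≤ k →
      UnifSTorsion S (((Ext R (ModuleCat.{u} R) (n + k)).obj (Opposite.op M)).obj N) := by
  obtain ⟨s, hs, hsN⟩ := stmt6_general S M n h
  exact fun N k hk ↦ ⟨s, hs, hsN N k hk⟩
end

section
/- Let R be a commutative ring, S a multiplicative subset of R, M an R-module and n ≥ 1 an integer. If there exists an exact sequence of R-modules 0 → F_n → F_{n-1} → ⋯ → F_1 → F_0 → M → 0 in which F_0, F_1, …, F_{n-1} are projective and F_n is S-projective, then Ext^{n+1}_R(M, N) is uniformly S-torsion for every R-module N. -/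
open CategoryTheory

universe u

/-!
Let `0 → K → P → X → 0` be short exact with `P` projective. Splicing a projective resolution of
`K` with `P` gives a projective resolution of `X` which, in positive degrees, is the former shifted
by one. Since `Ext` in degrees `≥ 2` only sees these terms, `Ext^{k+2}(X, Y) ≅ Ext^{k+1}(K, Y)`,
linearly over the base ring. Iterating along the long exact sequence identifies `Ext^{n+1}(M, N)`
with `Ext^1(F_n, N)`, and the torsion bound is transported through this isomorphism.
-/

universe v w

lemma UnifSTorsion.of_surjective {R : Type u} [CommRing R] {S : Submonoid R} {M N : Type*}
    [AddCommMonoid M] [Module R M] [AddCommMonoid N] [Module R N] (f : M →ₗ[R] N)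
    (hf : Function.Surjective f) (h : UnifSTorsion S M) : UnifSTorsion S N := by
  obtain ⟨s, hs, hM⟩ := h
  refine ⟨s, hs, fun y ↦ ?_⟩
  obtain ⟨x, rfl⟩ := hf y
  rw [← map_smul, hM, map_zero]

section

open Limits

variable {C : Type v} [Category.{w} C]

section HasZeroMorphisms

variable [HasZeroMorphisms C] {T : ShortComplex C} {Z : C}

lemma exact_epi_comp_iff (p : Z ⟶ T.X₁) [Epi p] :
    (ShortComplex.mk (p ≫ T.f) T.g (by simp)).Exact ↔ T.Exact := by
  let φ : ShortComplex.mk (p ≫ T.f) T.g (by simp) ⟶ T := { τ₁ := p, τ₂ := 𝟙 _, τ₃ := 𝟙 _ }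
  exact ShortComplex.exact_iff_of_epi_of_isIso_of_mono φ

lemma exact_comp_mono_iff (i : T.X₃ ⟶ Z) [Mono i] :
    (ShortComplex.mk T.f (T.g ≫ i) (by simp)).Exact ↔ T.Exact := by
  let φ : T ⟶ ShortComplex.mk T.f (T.g ≫ i) (by simp) := { τ₁ := 𝟙 _, τ₂ := 𝟙 _, τ₃ := i }
  exact (ShortComplex.exact_iff_of_epi_of_isIso_of_mono φ).symm

end HasZeroMorphisms

variable [Abelian C]

lemma quasiIso_toSingle₀Equiv_symm {K : ChainComplex C ℕ} {X : C} (f : K.X 0 ⟶ X)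
    (hf : Epi f) (w : K.d 1 0 ≫ f = 0) (h₀ : (ShortComplex.mk (K.d 1 0) f w).Exact)
    (h : ∀ n : ℕ, K.ExactAt (n + 1)) :
    QuasiIso ((ChainComplex.toSingle₀Equiv K X).symm ⟨f, w⟩) where
  quasiIsoAt n := by
    cases n with
    | zero =>
      have hπ := ChainComplex.toSingle₀Equiv_symm_apply_f_zero f w
      rw [ChainComplex.quasiIsoAt₀_iff,
        ShortComplex.quasiIso_iff_of_zeros' _ (K.shape 0 0 (by simp)) rfl rfl]
      refine (ShortComplex.exact_and_epi_g_iff_of_iso ?_).2 ⟨h₀, hf⟩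
      exact ShortComplex.isoMk (Iso.refl _) (Iso.refl _) (Iso.refl _)
        ((Category.id_comp _).trans (Category.comp_id _).symm)
        ((Category.id_comp _).trans (hπ.symm.trans (Category.comp_id _).symm))
    | succ n =>
      rw [quasiIsoAt_iff_exactAt' _ _ (ChainComplex.exactAt_succ_single_obj _ _)]
      exact h n

section Splicing

variable {X : C} (P : ProjectiveResolution X)

/-- The augmentation `P₀ ⟶ X` of a projective resolution of `X`. It is the degree `0` component
of `P.π`, with codomain `X` itself rather than the degree `0` term of a single-object complex. -/
noncomputable def augmentation : P.complex.X 0 ⟶ X :=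
  P.π.f 0

instance : Epi (augmentation P) :=
  inferInstanceAs (Epi (P.π.f 0))

@[simp]
lemma d_comp_augmentation : P.complex.d 1 0 ≫ augmentation P = 0 :=
  P.complex_d_comp_π_f_zero

lemma exact_d_augmentation :
    (ShortComplex.mk (P.complex.d 1 0) (augmentation P) (d_comp_augmentation P)).Exact :=
  ShortComplex.exact_of_g_is_cokernel _ P.isColimitCokernelCofork

/-- The complex `⋯ ⟶ P₁ ⟶ P₀ ⟶ Y` obtained from a projective resolution `P` of `X` and a morphism
`f : X ⟶ Y`; the object `Y` sits in degree `0`, so the terms of `P` move up by one. -/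
noncomputable def splicedComplex {Y : C} (f : X ⟶ Y) : ChainComplex C ℕ :=
  P.complex.augment (augmentation P ≫ f)
    (by rw [← Category.assoc, d_comp_augmentation, zero_comp])

lemma splicedComplex_exactAt_succ {Y : C} (f : X ⟶ Y) [Mono f] (n : ℕ) :
    (splicedComplex P f).ExactAt (n + 1) := by
  rw [HomologicalComplex.exactAt_iff' _ (n + 2) (n + 1) n (by simp) (by simp)]
  cases n with
  | zero => exact (exact_comp_mono_iff f).2 (exact_d_augmentation P)
  | succ n => exact P.exact_succ n

end Splicing

variable {T : ShortComplex C}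

/-- Given a short exact sequence `0 ⟶ X₁ ⟶ X₂ ⟶ X₃ ⟶ 0` with `X₂` projective, the projective
resolution `⋯ ⟶ P₁ ⟶ P₀ ⟶ X₂` of `X₃` built from a projective resolution `P` of `X₁`. -/
noncomputable def splicedResolution (hT : T.ShortExact) [Projective T.X₂]
    (P : ProjectiveResolution T.X₁) : ProjectiveResolution T.X₃ :=
  have w : (augmentation P ≫ T.f) ≫ T.g = 0 := by simp
  have : Mono T.f := hT.mono_f
  { complex := splicedComplex P T.f
    projective := by
      rintro (_ | n)
      · exact ‹Projective T.X₂›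
      · exact P.projective n
    π := (ChainComplex.toSingle₀Equiv _ _).symm ⟨T.g, w⟩
    quasiIso := quasiIso_toSingle₀Equiv_symm (K := splicedComplex P T.f) T.g hT.epi_g w
      ((exact_epi_comp_iff (augmentation P)).2 hT.exact) (splicedComplex_exactAt_succ P T.f) }

/-- Dimension shifting for `Ext` in the first variable, along a short exact sequence
`0 ⟶ X₁ ⟶ X₂ ⟶ X₃ ⟶ 0` with `X₂` projective. -/
noncomputable def extDimensionShift {R : Type u} [Ring R] [Linear R C] [EnoughProjectives C]
    (hT : T.ShortExact) [Projective T.X₂] (n : ℕ) (Y : C) :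
    ((Ext R C (n + 2)).obj (Opposite.op T.X₃)).obj Y ≅
      ((Ext R C (n + 1)).obj (Opposite.op T.X₁)).obj Y :=
  let P := projectiveResolution T.X₁
  let Q := splicedResolution hT P
  let K := P.complex.linearYonedaObj R Y
  let L := Q.complex.linearYonedaObj R Y
  let φ : L.sc (n + 2) ≅ K.sc (n + 1) :=
    L.isoSc' (n + 1) (n + 2) (n + 3) (by simp) (by simp) ≪≫
      -- In positive degrees `Q` is definitionally the shift of `P`.
      (show L.sc' (n + 1) (n + 2) (n + 3) ≅ K.sc' n (n + 1) (n + 2) from Iso.refl _) ≪≫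
      (K.isoSc' n (n + 1) (n + 2) (by simp) (by simp)).symm
  Q.isoExt (n + 2) Y ≪≫ ShortComplex.homologyMapIso φ ≪≫ (P.isoExt (n + 1) Y).symm

/-- `IsSyzygy n K X` says that `K` is an `n`-th syzygy of `X`: it is reached from `X` by passing
`n` times from the right end to the left end of a short exact sequence with projective middle
term. -/
inductive IsSyzygy : ℕ → C → C → Prop
  | refl (X : C) : IsSyzygy 0 X X
  | step {n : ℕ} {K : C} {T : ShortComplex C} (hT : T.ShortExact) (hP : Projective T.X₂)
      (h : IsSyzygy n K T.X₁) : IsSyzygy (n + 1) K T.X₃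

namespace IsSyzygy

lemma nonempty_ext_iso {R : Type u} [Ring R] [Linear R C] [EnoughProjectives C] {n : ℕ} {K X : C}
    (h : IsSyzygy n K X) (k : ℕ) (Y : C) :
    Nonempty (((Ext R C (k + n + 1)).obj (Opposite.op X)).obj Y ≅
      ((Ext R C (k + 1)).obj (Opposite.op K)).obj Y) := by
  induction h with
  | refl X => exact ⟨Iso.refl _⟩
  | step hT _ _ ih => exact ih.map fun φ ↦ extDimensionShift hT _ Y ≪≫ φ

lemma of_exact {n : ℕ} {M : C} {F : ℕ → C} {d : ∀ i : ℕ, F (i + 1) ⟶ F i} {e : F 0 ⟶ M}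
    (hmono : Mono (d n))
    (hmid : ∀ i < n, ∃ w, (ShortComplex.mk (d (i + 1)) (d i) w).Exact)
    (hexact₀ : ∃ w, (ShortComplex.mk (d 0) e w).Exact) (hepi : Epi e)
    (hproj : ∀ i ≤ n, Projective (F i)) :
    IsSyzygy (n + 1) (F (n + 1)) M := by
  obtain ⟨w, hw⟩ := hexact₀
  induction n generalizing F M with
  | zero =>
    exact step { exact := hw, mono_f := hmono, epi_g := hepi } (hproj 0 le_rfl) (refl _)
  | succ n ih =>
    have hker : (ShortComplex.mk (kernel.ι e) e (by simp)).ShortExact :=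
      { exact := ShortComplex.exact_kernel e }
    have hepi_lift : Epi (kernel.lift e (d 0) w) := hw.epi_kernelLift
    obtain ⟨w₁, hw₁⟩ := hmid 0 (by lia)
    have w_lift : d 1 ≫ kernel.lift e (d 0) w = 0 := by simp [← cancel_mono (kernel.ι e), w₁]
    have hw_lift : (ShortComplex.mk (d 1) (kernel.lift e (d 0) w) w_lift).Exact := by
      rw [← exact_comp_mono_iff (kernel.ι e)]
      simpa only [kernel.lift_ι] using hw₁
    exact step hker (hproj 0 (by lia)) (ih (d := fun i ↦ d (i + 1)) hmono
      (fun i hi ↦ hmid (i + 1) (by lia)) hepi_lift (fun i hi ↦ hproj (i + 1) (by lia))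
      w_lift hw_lift)

end IsSyzygy

theorem stmt8_general {R : Type u} [CommRing R] [Linear R C] [EnoughProjectives C]
    (S : Submonoid R) (M : C) (n : ℕ)
    (F : ℕ → C) (d : ∀ i : ℕ, F (i + 1) ⟶ F i) (e : F 0 ⟶ M)
    (hmono : Mono (d n))
    (hmid : ∀ i < n, ∃ w, (ShortComplex.mk (d (i + 1)) (d i) w).Exact)
    (hexact₀ : ∃ w, (ShortComplex.mk (d 0) e w).Exact)
    (hepi : Epi e)
    (hproj : ∀ i ≤ n, Projective (F i))
    (N : C) (hF : UnifSTorsion S (((Ext R C 1).obj (Opposite.op (F (n + 1)))).obj N)) :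
    UnifSTorsion S (((Ext R C (n + 2)).obj (Opposite.op M)).obj N) := by
  have hsyz : IsSyzygy (n + 1) (F (n + 1)) M := .of_exact hmono hmid hexact₀ hepi hproj
  obtain ⟨φ⟩ := hsyz.nonempty_ext_iso (R := R) 0 N
  rw [show n + 2 = 0 + (n + 1) + 1 by lia]
  exact hF.of_surjective φ.inv.hom φ.symm.toLinearEquiv.surjective

end

lemma exists_shortComplex_mk_exact {R : Type u} [Ring R] {A B D : ModuleCat.{v} R}
    {f : A ⟶ B} {g : B ⟶ D} (h : Function.Exact f g) : ∃ w, (ShortComplex.mk f g w).Exact :=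
  ⟨ModuleCat.hom_ext h.linearMap_comp_eq_zero,
    (ShortComplex.ShortExact.moduleCat_exact_iff_function_exact _).2 h⟩

/-- If there is an exact sequence `0 → F_n → ⋯ → F_1 → F_0 → M → 0` with `F_0, …, F_{n-1}`
projective and `F_n` `S`-projective (`n ≥ 1`), then `Ext^{n+1}(M, N)` is uniformly
`S`-torsion for every `N`. -/
theorem stmt8 {R : Type u} [CommRing R] (S : Submonoid R) (M : ModuleCat.{u} R)
    (n : ℕ) (hn : 1 ≤ n)
    (F : ℕ → ModuleCat.{u} R) (d : ∀ i : ℕ, F (i + 1) ⟶ F i) (e : F 0 ⟶ M)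
    (hinj : Function.Injective ⇑(d (n - 1)))
    (hmid : ∀ i : ℕ, i + 2 ≤ n → Function.Exact ⇑(d (i + 1)) ⇑(d i))
    (hexact0 : Function.Exact ⇑(d 0) ⇑e)
    (hsurj : Function.Surjective ⇑e)
    (hproj : ∀ i : ℕ, i < n → Module.Projective R (F i))
    (hFn : ∀ N : ModuleCat.{u} R,
      UnifSTorsion S (((Ext R (ModuleCat.{u} R) 1).obj (Opposite.op (F n))).obj N)) :
    ∀ N : ModuleCat.{u} R,
      UnifSTorsion S (((Ext R (ModuleCat.{u} R) (n + 1)).obj (Opposite.op M)).obj N) := by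
  obtain ⟨n, rfl⟩ := Nat.exists_eq_add_of_le' hn
  exact fun N ↦ stmt8_general S M n F d e ((ModuleCat.mono_iff_injective _).2 hinj)
    (fun i hi ↦ exists_shortComplex_mk_exact (hmid i (by lia)))
    (exists_shortComplex_mk_exact hexact0)
    ((ModuleCat.epi_iff_surjective e).2 hsurj)
    (fun i hi ↦ (IsProjective.iff_projective _).1 (hproj i (by lia))) N (hFn N)
end

section
/- Let R be a commutative ring, S a multiplicative subset of R, and 0 → A →f B →g C → 0 an exact sequence of R-modules that is S-split, i.e., there exist s₁ ∈ S and an R-linear map f' : B → A with f' ∘ f = s₁·id_A. Then for every integer n ≥ 1 and every R-module N, Ext^n_R(B, N) is uniformly S-torsion if and only if both Ext^n_R(A, N) and Ext^n_R(C, N) are uniformly S-torsion. (Hence S-pd_R(B) = max{S-pd_R(A), S-pd_R(C)}.) -/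
open CategoryTheory

universe u

/-!
Write `s` for `s₁`. Since `s • 𝟙 B - f' ≫ f` vanishes on `A`, it factors through `g`, which gives
`g' : C ⟶ B` with `f' ≫ f + g ≫ g' = s • 𝟙 B` and `g' ≫ g = s • 𝟙 C`: the sequence is split up to
the factor `s`. Such data consist of identities between linear combinations of composites, so they
survive the `R`-linear functor `Ext^n(-, N)`. Hence `s • Ext^n(B, N)` lies in the sum of the images
of `Ext^n(A, N)` and `Ext^n(C, N)`, while `s • Ext^n(A, N)` and `s • Ext^n(C, N)` lie in images of
`Ext^n(B, N)`.
-/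

namespace UnifSTorsion

variable {R : Type u} [CommRing R] {S : Submonoid R} {M N : Type*} [AddCommMonoid M]
  [Module R M] [AddCommMonoid N] [Module R N]

lemma prod (hM : UnifSTorsion S M) (hN : UnifSTorsion S N) : UnifSTorsion S (M × N) := by
  obtain ⟨s, hs, hsM⟩ := hM
  obtain ⟨t, ht, htN⟩ := hN
  refine ⟨s * t, S.mul_mem hs ht, fun ⟨m, n⟩ => Prod.ext ?_ ?_⟩
  · change (s * t) • m = 0
    rw [mul_smul, hsM]
  · change (s * t) • n = 0
    rw [mul_smul, htN, smul_zero]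

lemma of_smul_mem_range (hN : UnifSTorsion S N) (φ : N →ₗ[R] M) {s : R} (hs : s ∈ S)
    (hφ : ∀ m : M, s • m ∈ LinearMap.range φ) : UnifSTorsion S M := by
  obtain ⟨t, ht, htN⟩ := hN
  refine ⟨t * s, S.mul_mem ht hs, fun m => ?_⟩
  obtain ⟨n, hn⟩ := hφ m
  rw [mul_smul, ← hn, ← map_smul, htN, map_zero]

end UnifSTorsion

section Linearity

open Functor HomologicalComplex

variable {R : Type*} [Semiring R] {C D : Type*} [Category* C] [Category* D]

/-- The opposite of an `R`-linear category is `R`-linear, with `r • φ.op = (r • φ).op`. No passage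
to `Rᵐᵒᵖ` is needed, since scalars commute past composition. -/
instance oppositeLinear [Preadditive C] [Linear R C] : Linear R Cᵒᵖ where
  homModule X Y :=
    { smul := fun r φ => (r • φ.unop).op
      one_smul := fun φ => Quiver.Hom.unop_inj (one_smul R φ.unop)
      mul_smul := fun r s φ => Quiver.Hom.unop_inj (mul_smul r s φ.unop)
      smul_zero := fun r => Quiver.Hom.unop_inj (smul_zero (A := Y.unop ⟶ X.unop) r)
      smul_add := fun r φ ψ => Quiver.Hom.unop_inj (smul_add r φ.unop ψ.unop)
      add_smul := fun r s φ => Quiver.Hom.unop_inj (add_smul r s φ.unop)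
      zero_smul := fun φ => Quiver.Hom.unop_inj (zero_smul R φ.unop) }
  smul_comp _ _ _ r φ ψ := Quiver.Hom.unop_inj (Linear.comp_smul _ _ _ ψ.unop r φ.unop)
  comp_smul _ _ _ φ r ψ := Quiver.Hom.unop_inj (Linear.smul_comp _ _ _ r ψ.unop φ.unop)

instance rightOp_linear [Preadditive C] [Linear R C] [Preadditive D] [Linear R D]
    (F : Cᵒᵖ ⥤ D) [F.Linear R] : F.rightOp.Linear R where
  map_smul φ r := congrArg Quiver.Hom.op (F.map_smul r φ.op)

instance leftOp_linear [Preadditive C] [Linear R C] [Preadditive D] [Linear R D]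
    (F : C ⥤ Dᵒᵖ) [F.Linear R] : F.leftOp.Linear R where
  map_smul φ r := congrArg Quiver.Hom.unop (F.map_smul r φ.unop)

instance homologyFunctor_linear [Preadditive C] [Linear R C] [CategoryWithHomology C] {ι : Type*}
    (c : ComplexShape ι) (i : ι) : (homologyFunctor C c i).Linear R where
  map_smul φ r := ShortComplex.homologyMap_smul ((shortComplexFunctor C c i).map φ) r

instance homotopyCategory_homologyFunctor_linear [Preadditive C] [Linear R C]
    [CategoryWithHomology C] {ι : Type*} (c : ComplexShape ι) (i : ι) :
    (HomotopyCategory.homologyFunctor C c i).Linear R :=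
  have := linear_of_iso R (HomotopyCategory.homologyFunctorFactors C c i).symm
  linear_of_full_essSurj_comp (HomotopyCategory.quotient C c) _

variable [Abelian C] [HasProjectiveResolutions C] [Abelian D]

lemma projectiveResolutions_map_eq {X Y : C} (f : X ⟶ Y)
    (φ : (projectiveResolution X).complex ⟶ (projectiveResolution Y).complex)
    (hφ : φ ≫ (projectiveResolution Y).π =
      (projectiveResolution X).π ≫ (ChainComplex.single₀ C).map f) :
    (projectiveResolutions C).map f = (HomotopyCategory.quotient C _).map φ :=
  HomotopyCategory.eq_of_homotopy _ _
    (ProjectiveResolution.liftHomotopy f _ _ (ProjectiveResolution.lift_commutes f _ _) hφ)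

instance projectiveResolutions_additive : (projectiveResolutions C).Additive where
  map_add {X Y f g} := by
    rw [projectiveResolutions_map_eq (f + g)
      (ProjectiveResolution.lift f _ _ + ProjectiveResolution.lift g _ _), Functor.map_add]
    · rfl
    · simp

instance projectiveResolutions_linear [Linear R C] : (projectiveResolutions C).Linear R where
  map_smul {X Y} f r := by
    rw [projectiveResolutions_map_eq (r • f) (r • ProjectiveResolution.lift f _ _),
      Functor.map_smul]
    · rfl
    · ext
      simp only [Linear.smul_comp, ProjectiveResolution.lift_commutes, smul_f_apply, comp_f,
        ChainComplex.single₀_map_f_zero]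
      exact (Linear.comp_smul _ _ _ _ r f).symm

instance leftDerived_additive (F : C ⥤ D) [F.Additive] (n : ℕ) : (F.leftDerived n).Additive :=
  inferInstanceAs (projectiveResolutions C ⋙ F.mapHomotopyCategory _ ⋙
    HomotopyCategory.homologyFunctor D _ n).Additive

instance leftDerived_linear [Linear R C] [Linear R D] (F : C ⥤ D) [F.Additive] [F.Linear R]
    (n : ℕ) : (F.leftDerived n).Linear R :=
  inferInstanceAs ((projectiveResolutions C ⋙ F.mapHomotopyCategory _ ⋙
    HomotopyCategory.homologyFunctor D _ n).Linear R)

end Linearity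

section Ext

variable {R : Type*} [CommRing R] {C : Type*} [Category* C]

instance linearYoneda_obj_linear [Preadditive C] [Linear R C] (N : C) :
    ((linearYoneda R C).obj N).Linear R where
  map_smul φ r := by
    ext ψ
    exact Linear.smul_comp _ _ _ r φ.unop ψ

variable [Abelian C] [Linear R C] [EnoughProjectives C]

instance ext_flip_obj_additive (n : ℕ) (N : C) : ((Ext R C n).flip.obj N).Additive :=
  inferInstanceAs (((linearYoneda R C).obj N).rightOp.leftDerived n).leftOp.Additive

instance ext_flip_obj_linear (n : ℕ) (N : C) : ((Ext R C n).flip.obj N).Linear R :=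
  inferInstanceAs ((((linearYoneda R C).obj N).rightOp.leftDerived n).leftOp.Linear R)

end Ext

/-- A splitting of the short complex `K` up to the scalar `s`: the identities of
`ShortComplex.Splitting` with each identity morphism replaced by its multiple by `s`. For the
sequence of the theorem, `r` is `f'` and `σ` is a section of `g` up to `s`. -/
structure ScaledSplitting {R : Type*} [Semiring R] {C : Type*} [Category* C] [Preadditive C]
    [Linear R C] (K : ShortComplex C) (s : R) where
  r : K.X₂ ⟶ K.X₁
  σ : K.X₃ ⟶ K.X₂
  f_r : K.f ≫ r = s • 𝟙 K.X₁
  σ_g : σ ≫ K.g = s • 𝟙 K.X₃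
  id : r ≫ K.f + K.g ≫ σ = s • 𝟙 K.X₂

namespace ScaledSplitting

section

variable {R : Type*} [Semiring R] {C D : Type*} [Category* C] [Category* D] [Preadditive C]
  [Preadditive D] [Linear R C] [Linear R D] {K : ShortComplex C} {s : R}

/-- A retraction of `K.f` up to `s` extends to a scaled splitting: `s • 𝟙 K.X₂ - r ≫ K.f` vanishes
on `K.X₁`, so it descends along `K.g`. -/
noncomputable def ofExactOfRetraction [Balanced C] (hK : K.Exact) [Epi K.g] (r : K.X₂ ⟶ K.X₁)
    (hr : K.f ≫ r = s • 𝟙 K.X₁) : ScaledSplitting K s where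
  r := r
  σ := hK.desc (s • 𝟙 K.X₂ - r ≫ K.f) (by
    rw [Preadditive.comp_sub, ← Category.assoc, hr]
    simp)
  f_r := hr
  σ_g := by
    rw [← cancel_epi K.g, hK.g_desc_assoc]
    simp
  id := by
    rw [hK.g_desc]
    abel

/-- The scaled splitting of the opposite complex; it exchanges the roles of `r` and `σ`, and is what
contravariant functors such as `Ext^n(-, N)` are applied to. -/
def op (h : ScaledSplitting K s) : ScaledSplitting K.op s where
  r := h.σ.op
  σ := h.r.op
  f_r := congrArg Quiver.Hom.op h.σ_g
  σ_g := congrArg Quiver.Hom.op h.f_r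
  id := congrArg Quiver.Hom.op ((add_comm _ _).trans h.id)

/-- The image of a scaled splitting under an `R`-linear functor. -/
def map (h : ScaledSplitting K s) (F : C ⥤ D) [F.Additive] [F.Linear R] :
    ScaledSplitting (K.map F) s where
  r := F.map h.r
  σ := F.map h.σ
  f_r := show F.map K.f ≫ F.map h.r = s • 𝟙 (F.obj K.X₁) by
    simpa using congrArg F.map h.f_r
  σ_g := show F.map h.σ ≫ F.map K.g = s • 𝟙 (F.obj K.X₃) by
    simpa using congrArg F.map h.σ_g
  id := show F.map h.r ≫ F.map K.f + F.map K.g ≫ F.map h.σ = s • 𝟙 (F.obj K.X₂) by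
    simpa using congrArg F.map h.id

end

lemma unifSTorsion_iff {R : Type u} [CommRing R] {S : Submonoid R}
    {K : ShortComplex (ModuleCat R)} {s : R} (h : ScaledSplitting K s) (hs : s ∈ S) :
    UnifSTorsion S K.X₂ ↔ UnifSTorsion S K.X₁ ∧ UnifSTorsion S K.X₃ := by
  refine ⟨fun h₂ => ⟨?_, ?_⟩, fun ⟨h₁, h₃⟩ => ?_⟩
  · exact h₂.of_smul_mem_range h.r.hom hs fun m => ⟨K.f m, ConcreteCategory.congr_hom h.f_r m⟩
  · exact h₂.of_smul_mem_range K.g.hom hs fun m => ⟨h.σ m, ConcreteCategory.congr_hom h.σ_g m⟩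
  · exact (h₁.prod h₃).of_smul_mem_range (K.f.hom.coprod h.σ.hom) hs fun m =>
      ⟨(h.r m, K.g m), ConcreteCategory.congr_hom h.id m⟩

end ScaledSplitting

theorem stmt13_general {R : Type u} [CommRing R] (S : Submonoid R) {𝒜 : Type*} [Category* 𝒜]
    [Abelian 𝒜] [Linear R 𝒜] [EnoughProjectives 𝒜] (K : ShortComplex 𝒜) (hK : K.Exact) [Epi K.g]
    (hsplit : ∃ s ∈ S, ∃ r : K.X₂ ⟶ K.X₁, K.f ≫ r = s • 𝟙 K.X₁) (n : ℕ) (N : 𝒜) :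
    UnifSTorsion S (((Ext R 𝒜 n).obj (Opposite.op K.X₂)).obj N) ↔
      UnifSTorsion S (((Ext R 𝒜 n).obj (Opposite.op K.X₁)).obj N) ∧
        UnifSTorsion S (((Ext R 𝒜 n).obj (Opposite.op K.X₃)).obj N) := by
  obtain ⟨s, hs, r, hr⟩ := hsplit
  let splitting := ScaledSplitting.ofExactOfRetraction hK r hr
  exact ((splitting.op.map ((Ext R 𝒜 n).flip.obj N)).unifSTorsion_iff hs).trans and_comm

/-- Let `0 → A --f--> B --g--> C → 0` be an exact sequence that is `S`-split, i.e. there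
are `s₁ ∈ S` and `f' : B → A` with `f' ∘ f = s₁ • id`. Then for every `n ≥ 1` and every `N`,
`Ext^n(B, N)` is uniformly `S`-torsion iff both `Ext^n(A, N)` and `Ext^n(C, N)` are. -/
theorem stmt13 {R : Type u} [CommRing R] (S : Submonoid R)
    {A B C : ModuleCat.{u} R} (f : A ⟶ B) (g : B ⟶ C)
    (hinj : Function.Injective ⇑f)
    (hexact : Function.Exact ⇑f ⇑g)
    (hsurj : Function.Surjective ⇑g)
    (hsplit : ∃ s₁ ∈ S, ∃ f' : B ⟶ A, ∀ a : A, f' (f a) = s₁ • a) :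
    ∀ (n : ℕ), 1 ≤ n → ∀ N : ModuleCat.{u} R,
      (UnifSTorsion S (((Ext R (ModuleCat.{u} R) n).obj (Opposite.op B)).obj N) ↔
        UnifSTorsion S (((Ext R (ModuleCat.{u} R) n).obj (Opposite.op A)).obj N) ∧
          UnifSTorsion S (((Ext R (ModuleCat.{u} R) n).obj (Opposite.op C)).obj N)) := by
  intro n _ N
  obtain ⟨s, hs, f', hf'⟩ := hsplit
  have : Epi g := (ModuleCat.epi_iff_surjective g).2 hsurj
  let K := ShortComplex.mk f g (ModuleCat.hom_ext hexact.linearMap_comp_eq_zero)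
  exact stmt13_general S K (ModuleCat.shortComplex_exact K hexact)
    ⟨s, hs, f', ModuleCat.hom_ext (LinearMap.ext hf')⟩ n N
end
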